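/- (Ellipticity in the massive incoming region) Let m₀ > 0. There exists ε* > 0 such that for every 0 < ε ≤ ε* there are constants c₁, c₂, c₃ > 0 with the following property: for every R ≥ 1, every sign σ ∈ {+1,−1}, and every (x,ξ) = ((t,y),(τ,η)) ∈ Ω⁰_{ε,R,m₀,in} with σt ≤ 0, one has στ ≤ −c₁|ξ|, σt < −c₂|x|, and |τ − σ√(|η|²+m₀²)| ≥ c₃(1+|ξ|). -/

import Mathlib

noncomputable section

open scoped RealInnerProductSpace

/-! The cosine condition says that the unit vector `x/|x|` lies within `√(2ε)` of `-ξ̃/|ξ|`. The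
time component of the latter is `τ/|ξ|`, so `t/|x|` and `τ/|ξ|` differ by less than `√(2ε)`. On the
other hand, closeness to the mass shell keeps `ξ` away from spacelike directions:
`|τ|/|ξ| ≥ √((1 - ε)/2)`. For `ε < 1/5` this lower bound exceeds `√(2ε)`, so `σt ≤ 0` forces
`στ ≤ -√((1 - ε)/2) |ξ|`, and then `σt` is itself bounded away from `0` relative to `|x|`. Since
`στ` is negative, nothing cancels in `√(|η|² + m₀²) - στ`. -/

open InnerProductGeometry

section Angle

variable {V : Type*} [NormedAddCommGroup V] [InnerProductSpace ℝ V] {x y : V}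

lemma norm_normalize_add_normalize_sq (hx : x ≠ 0) (hy : y ≠ 0) :
    ‖NormedSpace.normalize x + NormedSpace.normalize y‖ ^ 2 = 2 * (1 + Real.cos (angle x y)) := by
  have hx' : ‖NormedSpace.normalize x‖ = 1 := NormedSpace.norm_normalize_eq_one_iff.2 hx
  have hy' : ‖NormedSpace.normalize y‖ = 1 := NormedSpace.norm_normalize_eq_one_iff.2 hy
  rw [norm_add_sq_real, inner_eq_cos_angle_of_norm_eq_one hx' hy', angle_normalize_left,
    angle_normalize_right, hx', hy']
  ring

lemma norm_normalize_add_normalize_lt {ε : ℝ} (hx : x ≠ 0) (hy : y ≠ 0)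
    (h : Real.cos (angle x y) < -1 + ε) :
    ‖NormedSpace.normalize x + NormedSpace.normalize y‖ < √(2 * ε) := by
  apply Real.lt_sqrt_of_sq_lt
  rw [norm_normalize_add_normalize_sq hx hy]
  linarith

end Angle

lemma le_neg_of_abs_sub_lt {a b c δ : ℝ} (ha : a ≤ 0) (hab : |a - b| < δ) (hδ : δ ≤ c)
    (hb : c ≤ |b|) : b ≤ -c := by
  have hba : b < a + δ := by linarith [(abs_lt.1 hab).1]
  exact (le_abs'.1 hb).resolve_right (by linarith)

lemma abs_sub_mul_eq_abs_mul_sub {σ : ℝ} (hσ : σ = 1 ∨ σ = -1) (a b : ℝ) :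
    |a - σ * b| = |σ * a - b| := by
  rcases hσ with rfl | rfl
  · simp only [one_mul]
  · rw [← abs_neg]
    congr 1
    ring

lemma min_mul_one_add_le_abs_sub {c e m r w : ℝ} (hr : 0 ≤ r) (hm : m ≤ e)
    (hw : w ≤ -c * r) : min c m * (1 + r) ≤ |w - e| :=
  calc min c m * (1 + r) = min c m + min c m * r := by ring
    _ ≤ m + c * r := by gcongr; exacts [min_le_right c m, min_le_left c m]
    _ ≤ -(w - e) := by linarith
    _ ≤ |w - e| := neg_le_abs _

lemma sqrt_two_mul_lt_sqrt_one_sub_div_two {ε : ℝ} (hε : ε < 1 / 5) :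
    √(2 * ε) < √((1 - ε) / 2) :=
  (Real.sqrt_lt_sqrt_iff_of_pos (by linarith)).2 (by linarith)

section Spacetime

variable {F : Type*} [NormedAddCommGroup F]

/-- The reflection `ξ = (τ, η) ↦ ξ̃ = (-τ, η)` of the time coordinate. Spacetime is modelled as the
`L²` product `WithLp 2 (ℝ × F)`, so that it carries the Euclidean norm and inner product. -/
def timeReflection (ξ : WithLp 2 (ℝ × F)) : WithLp 2 (ℝ × F) :=
  WithLp.toLp 2 (-ξ.fst, ξ.snd)

/-- The symbol `p₀(ξ) = -τ² + |η|²` of the wave operator; `p₀ + m₀²` vanishes on the mass shell. -/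
def waveSymbol (ξ : WithLp 2 (ℝ × F)) : ℝ :=
  -ξ.fst ^ 2 + ‖ξ.snd‖ ^ 2

lemma norm_toLp_real_prod (t : ℝ) (y : F) : ‖WithLp.toLp 2 (t, y)‖ = √(t ^ 2 + ‖y‖ ^ 2) := by
  simp [WithLp.prod_norm_eq_of_L2]

lemma norm_sq_eq_fst_sq_add_norm_snd_sq (ξ : WithLp 2 (ℝ × F)) :
    ‖ξ‖ ^ 2 = ξ.fst ^ 2 + ‖ξ.snd‖ ^ 2 := by
  rw [WithLp.prod_norm_sq_eq_of_L2, Real.norm_eq_abs, sq_abs]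

lemma norm_timeReflection (ξ : WithLp 2 (ℝ × F)) : ‖timeReflection ξ‖ = ‖ξ‖ := by
  simp [timeReflection, WithLp.prod_norm_eq_of_L2]

lemma timeReflection_ne_zero {ξ : WithLp 2 (ℝ × F)} (hξ : ξ ≠ 0) : timeReflection ξ ≠ 0 := by
  rwa [← norm_ne_zero_iff, norm_timeReflection, norm_ne_zero_iff]

lemma sqrt_le_abs_fst_div_norm {ε : ℝ} {ξ : WithLp 2 (ℝ × F)} (hξ : ξ ≠ 0)
    (h : waveSymbol ξ ≤ ε * ‖ξ‖ ^ 2) : √((1 - ε) / 2) ≤ |ξ.fst / ‖ξ‖| := by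
  refine Real.sqrt_le_iff.2 ⟨abs_nonneg _, ?_⟩
  have hpos : 0 < ‖ξ‖ ^ 2 := by positivity
  rw [sq_abs, div_pow, le_div_iff₀ hpos]
  rw [waveSymbol] at h
  linarith [norm_sq_eq_fst_sq_add_norm_snd_sq ξ]

variable [InnerProductSpace ℝ F]

lemma abs_fst_div_norm_sub_lt {ε : ℝ} {x ξ : WithLp 2 (ℝ × F)} (hx : x ≠ 0) (hξ : ξ ≠ 0)
    (hcos : Real.cos (angle x (timeReflection ξ)) < -1 + ε) :
    |x.fst / ‖x‖ - ξ.fst / ‖ξ‖| < √(2 * ε) :=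
  calc |x.fst / ‖x‖ - ξ.fst / ‖ξ‖|
      = ‖(NormedSpace.normalize x + NormedSpace.normalize (timeReflection ξ)).fst‖ := by
        rw [NormedSpace.normalize, NormedSpace.normalize, norm_timeReflection]
        simp [timeReflection, div_eq_inv_mul, sub_eq_add_neg]
    _ ≤ ‖NormedSpace.normalize x + NormedSpace.normalize (timeReflection ξ)‖ :=
        WithLp.norm_fst_le ..
    _ < √(2 * ε) := norm_normalize_add_normalize_lt hx (timeReflection_ne_zero hξ) hcos

/-- The massive incoming region `Ω⁰_{ε,R,m₀,in}`: the pairs `(x, ξ)` with `|x| ≥ R`, with `ξ ≠ 0`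
close to the mass shell, and with `x` nearly antiparallel to `ξ̃ = ∇p₀(ξ) / 2`, the direction of
propagation. -/
def massiveIncomingRegion (F : Type*) [NormedAddCommGroup F] [InnerProductSpace ℝ F]
    (ε R m₀ : ℝ) : Set (WithLp 2 (ℝ × F) × WithLp 2 (ℝ × F)) :=
  {p | R ≤ ‖p.1‖ ∧ p.2 ≠ 0 ∧ Real.cos (angle p.1 (timeReflection p.2)) < -1 + ε ∧
    |waveSymbol p.2 + m₀ ^ 2| < ε * ‖p.2‖ ^ 2}

lemma toLp_mem_massiveIncomingRegion_iff {ε R m₀ t τ : ℝ} {y η : F} :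
    (WithLp.toLp 2 (t, y), WithLp.toLp 2 (τ, η)) ∈ massiveIncomingRegion F ε R m₀ ↔
      R ≤ √(t ^ 2 + ‖y‖ ^ 2) ∧ ¬(τ = 0 ∧ η = 0) ∧
        (-(t * τ) + ⟪y, η⟫) / (√(t ^ 2 + ‖y‖ ^ 2) * √(τ ^ 2 + ‖η‖ ^ 2)) < -1 + ε ∧
        |(-τ ^ 2 + ‖η‖ ^ 2) + m₀ ^ 2| < ε * (τ ^ 2 + ‖η‖ ^ 2) := by
  simp [massiveIncomingRegion, cos_angle, norm_toLp_real_prod, norm_sq_eq_fst_sq_add_norm_snd_sq,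
    waveSymbol, timeReflection, mul_comm τ t]

section MassiveIncomingRegion

variable {ε R m₀ σ : ℝ} {x ξ : WithLp 2 (ℝ × F)}

lemma abs_mul_fst_div_norm_sub_lt (hR : 0 < R) (hσ : |σ| = 1)
    (h : (x, ξ) ∈ massiveIncomingRegion F ε R m₀) :
    |σ * x.fst / ‖x‖ - σ * ξ.fst / ‖ξ‖| < √(2 * ε) := by
  obtain ⟨hRx, hξ, hcos, -⟩ := h
  have hx : x ≠ 0 := norm_pos_iff.1 (hR.trans_le hRx)
  rw [mul_div_assoc, mul_div_assoc, ← mul_sub, abs_mul, hσ, one_mul]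
  exact abs_fst_div_norm_sub_lt hx hξ hcos

lemma mul_fst_div_norm_le_neg_sqrt (hε : ε < 1 / 5) (hR : 0 < R) (hσ : |σ| = 1)
    (h : (x, ξ) ∈ massiveIncomingRegion F ε R m₀) (ht : σ * x.fst ≤ 0) :
    σ * ξ.fst / ‖ξ‖ ≤ -√((1 - ε) / 2) := by
  have hclose := abs_mul_fst_div_norm_sub_lt hR hσ h
  obtain ⟨-, hξ, -, hshell⟩ := h
  have hsymbol : waveSymbol ξ ≤ ε * ‖ξ‖ ^ 2 := by
    linarith [(abs_lt.1 hshell).2, sq_nonneg m₀]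
  refine le_neg_of_abs_sub_lt (div_nonpos_of_nonpos_of_nonneg ht (norm_nonneg x)) hclose
    (sqrt_two_mul_lt_sqrt_one_sub_div_two hε).le ?_
  rw [mul_div_assoc, abs_mul, hσ, one_mul]
  exact sqrt_le_abs_fst_div_norm hξ hsymbol

end MassiveIncomingRegion

theorem massive_incoming_ellipticity_general {ε m₀ : ℝ} (hε : ε < 1 / 5) (hm₀ : m₀ ≠ 0) :
    ∃ c₁ > (0 : ℝ), ∃ c₂ > (0 : ℝ), ∃ c₃ > (0 : ℝ),
      ∀ R > (0 : ℝ), ∀ σ : ℝ, (σ = 1 ∨ σ = -1) →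
        ∀ x ξ : WithLp 2 (ℝ × F), (x, ξ) ∈ massiveIncomingRegion F ε R m₀ → σ * x.fst ≤ 0 →
          σ * ξ.fst ≤ -c₁ * ‖ξ‖ ∧
          σ * x.fst < -c₂ * ‖x‖ ∧
          c₃ * (1 + ‖ξ‖) ≤ |ξ.fst - σ * √(‖ξ.snd‖ ^ 2 + m₀ ^ 2)| := by
  have hc₁ : 0 < √((1 - ε) / 2) := Real.sqrt_pos.2 (by linarith)
  refine ⟨√((1 - ε) / 2), hc₁, √((1 - ε) / 2) - √(2 * ε),
    sub_pos.2 (sqrt_two_mul_lt_sqrt_one_sub_div_two hε),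
    min √((1 - ε) / 2) |m₀|, lt_min hc₁ (abs_pos.2 hm₀), ?_⟩
  intro R hR σ hσ x ξ h ht
  have hσ_abs : |σ| = 1 := (abs_eq zero_le_one).2 hσ
  have hx_pos : 0 < ‖x‖ := hR.trans_le h.1
  have hξ_pos : 0 < ‖ξ‖ := norm_pos_iff.2 h.2.1
  have hclose := abs_mul_fst_div_norm_sub_lt hR hσ_abs h
  have hτ_div := mul_fst_div_norm_le_neg_sqrt hε hR hσ_abs h ht
  have hτ : σ * ξ.fst ≤ -√((1 - ε) / 2) * ‖ξ‖ := (div_le_iff₀ hξ_pos).1 hτ_div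
  have ht_div : σ * x.fst / ‖x‖ < -(√((1 - ε) / 2) - √(2 * ε)) := by
    linarith [(abs_lt.1 hclose).2]
  have hmass : |m₀| ≤ √(‖ξ.snd‖ ^ 2 + m₀ ^ 2) :=
    Real.abs_le_sqrt (le_add_of_nonneg_left (sq_nonneg _))
  refine ⟨hτ, (div_lt_iff₀ hx_pos).1 ht_div, ?_⟩
  rw [abs_sub_mul_eq_abs_mul_sub hσ]
  exact min_mul_one_add_le_abs_sub hξ_pos.le hmass hτ

end Spacetime

/-- **Ellipticity in the massive incoming region.**
Writing points of `ℝ^{n+1}` as `x = (t,y) ∈ ℝ × ℝⁿ` and dual variables as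
`ξ = (τ,η) ∈ ℝ × ℝⁿ`, with `p₀(ξ) = −τ² + |η|²`, `ξ̃ = (−τ,η)` and
`cos(x,ξ̃) = x·ξ̃/(|x||ξ̃|)` (noting `|ξ̃| = |ξ|`): for `m₀ > 0` there is `ε* > 0` such
that for every `0 < ε ≤ ε*` there are `c₁, c₂, c₃ > 0` with the property that for every
`R ≥ 1`, every sign `σ ∈ {1,−1}` and every `(x,ξ) ∈ Ω⁰_{ε,R,m₀,in}` with `σt ≤ 0`:
`στ ≤ −c₁|ξ|`, `σt < −c₂|x|`, and `|τ − σ√(|η|²+m₀²)| ≥ c₃(1+|ξ|)`. -/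
theorem massive_incoming_ellipticity
    (n : ℕ) (hn : 1 ≤ n) (m₀ : ℝ) (hm₀ : 0 < m₀) :
    ∃ εstar > (0 : ℝ), ∀ ε : ℝ, 0 < ε → ε ≤ εstar →
      ∃ c₁ > (0 : ℝ), ∃ c₂ > (0 : ℝ), ∃ c₃ > (0 : ℝ),
        ∀ R : ℝ, 1 ≤ R → ∀ σ : ℝ, (σ = 1 ∨ σ = -1) →
          ∀ (t τ : ℝ) (y η : EuclideanSpace ℝ (Fin n)),
            R ≤ Real.sqrt (t ^ 2 + ‖y‖ ^ 2) →
            ¬(τ = 0 ∧ η = 0) →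
            (-(t * τ) + ⟪y, η⟫) /
                (Real.sqrt (t ^ 2 + ‖y‖ ^ 2) * Real.sqrt (τ ^ 2 + ‖η‖ ^ 2)) < -1 + ε →
            |(-τ ^ 2 + ‖η‖ ^ 2) + m₀ ^ 2| < ε * (τ ^ 2 + ‖η‖ ^ 2) →
            σ * t ≤ 0 →
            σ * τ ≤ -c₁ * Real.sqrt (τ ^ 2 + ‖η‖ ^ 2) ∧
            σ * t < -c₂ * Real.sqrt (t ^ 2 + ‖y‖ ^ 2) ∧
            c₃ * (1 + Real.sqrt (τ ^ 2 + ‖η‖ ^ 2)) ≤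
              |τ - σ * Real.sqrt (‖η‖ ^ 2 + m₀ ^ 2)| := by
  refine ⟨1 / 6, by norm_num, fun ε _ hε => ?_⟩
  obtain ⟨c₁, hc₁, c₂, hc₂, c₃, hc₃, hbounds⟩ :=
    massive_incoming_ellipticity_general (F := EuclideanSpace ℝ (Fin n)) (ε := ε)
      (by linarith) hm₀.ne'
  refine ⟨c₁, hc₁, c₂, hc₂, c₃, hc₃, fun R hR σ hσ t τ y η hx hξ hcos hshell ht => ?_⟩
  simpa only [norm_toLp_real_prod, WithLp.toLp_fst, WithLp.toLp_snd] using
    hbounds R (zero_lt_one.trans_le hR) σ hσ _ _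
    (toLp_mem_massiveIncomingRegion_iff.2 ⟨hx, hξ, hcos, hshell⟩) ht

end
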